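/- For every alphabet Σ of size σ ≥ e^{10} and every n ∈ ℕ, if S ∈ Σⁿ is chosen uniformly at random, then E[n − L(S)] ≤ (σ²e² − e⁴)/(σ³ − 2σ²e² + e⁴). -/

import Mathlib

/-!
A string with a proper border of length `ℓ` is determined by `ℓ` and by the prefix obtained by
deleting that border, because its length minus `ℓ` is a period. Deleting the border lowers the
length by `ℓ` and cannot increase `L`. Unbordered strings contribute nothing to
`A n = ∑_{S ∈ Γⁿ} (n - L(S))`, so a union bound over `ℓ` gives
`A n ≤ ∑_{1 ≤ ℓ < n} (ℓ σ^(n-ℓ) + A (n-ℓ))` (`deficit_sum_rec`).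
By strong induction `A m ≤ 4 σ^(m-1) ≤ σ^m` for all `m`: as `ℓ + 1 ≤ 2^ℓ`, the right side is at most
`σ^n ∑_{ℓ ≥ 1} (2/σ)^ℓ ≤ 4 σ^(n-1)` (`deficit_sum_le`). Hence `E[n - L(S)] ≤ 4/σ`, which is below
the claimed bound since `4 ≤ e²`.
-/

open Finset

/-- `S` has a border of length `ℓ`: `1 ≤ ℓ ≤ |S|` and the length-`ℓ` prefix of `S`
equals its length-`ℓ` suffix. -/
def HasBorder {α : Type*} (S : List α) (ℓ : ℕ) : Prop :=
  1 ≤ ℓ ∧ ℓ ≤ S.length ∧ S.take ℓ = S.drop (S.length - ℓ)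

/-- A string is unbordered if it has no proper border (no border of length `< |S|`). -/
def Unbordered {α : Type*} (S : List α) : Prop :=
  ∀ ℓ, ℓ < S.length → ¬ HasBorder S ℓ

/-- `maxUnb S` is `L(S)`: the maximum length of (nonempty) unbordered factors of `S`. -/
noncomputable def maxUnb {α : Type*} (S : List α) : ℕ :=
  sSup {k | ∃ T, T ≠ [] ∧ T <:+: S ∧ Unbordered T ∧ T.length = k}

/-- `p > 0` is a period of `T` if `T[i] = T[i+p]` whenever both indices are valid. -/
def IsPeriod {α : Type*} (T : List α) (p : ℕ) : Prop :=
  0 < p ∧ ∀ (i : ℕ) (h : i + p < T.length),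
    T[i]'(Nat.lt_of_le_of_lt (Nat.le_add_right i p) h) = T[i + p]'h

/-- `per T` is the shortest period of `T`. -/
noncomputable def per {α : Type*} (T : List α) : ℕ := sInf {p | IsPeriod T p}

/-- `borderF S` is `F(S)`: the length of the shortest border of `S`. -/
noncomputable def borderF {α : Type*} (S : List α) : ℕ := sInf {ℓ | HasBorder S ℓ}

/-- `substr S i j` is the factor `S[i,j]` in 1-based closed-interval indexing. -/
def substr {α : Type*} (S : List α) (i j : ℕ) : List α := (S.drop (i - 1)).take (j + 1 - i)

theorem maxUnb_bddAbove {α : Type*} (S : List α) :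
    BddAbove {k | ∃ T, T ≠ [] ∧ T <:+: S ∧ Unbordered T ∧ T.length = k} := by
  refine ⟨S.length, ?_⟩
  rintro k ⟨T, -, hT, -, rfl⟩
  exact hT.length_le

theorem maxUnb_le_length {α : Type*} (S : List α) : maxUnb S ≤ S.length := by
  refine csSup_le' ?_
  rintro k ⟨T, -, hT, -, rfl⟩
  exact hT.length_le

theorem maxUnb_mono {α : Type*} {S S' : List α} (h : S' <:+: S) : maxUnb S' ≤ maxUnb S := by
  refine csSup_le' ?_
  rintro k ⟨T, h0, hT, hu, rfl⟩
  exact le_csSup (maxUnb_bddAbove S) ⟨T, h0, hT.trans h, hu, rfl⟩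

theorem length_le_maxUnb {α : Type*} {S : List α} (h : Unbordered S) : S.length ≤ maxUnb S := by
  by_cases h0 : S = []
  · simp [h0]
  · exact le_csSup (maxUnb_bddAbove S) ⟨S, h0, List.infix_refl S, h, rfl⟩

/-- The prefix of length `n - ℓ` of a string of length `n`. -/
def dropEnd {Γ : Type} {n : ℕ} (ℓ : ℕ) (S : Fin n → Γ) : Fin (n - ℓ) → Γ :=
  fun i => S (Fin.castLE (Nat.sub_le n ℓ) i)

theorem ofFn_dropEnd_infix {Γ : Type} {n : ℕ} (ℓ : ℕ) (S : Fin n → Γ) :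
    List.ofFn (dropEnd ℓ S) <:+: List.ofFn S := by
  have h : List.ofFn (dropEnd ℓ S) = (List.ofFn S).take (n - ℓ) := by
    apply List.ext_getElem
    · simp
    · intro i h1 h2
      simp [dropEnd]
  rw [h]
  exact (List.take_prefix _ _).isInfix

theorem period_of_hasBorder {Γ : Type} {n ℓ : ℕ} {S : Fin n → Γ}
    (h : HasBorder (List.ofFn S) ℓ) (i : ℕ) (hi : i < n) (hl : n - ℓ ≤ i) :
    S ⟨i, hi⟩ = S ⟨i - (n - ℓ), by omega⟩ := by
  obtain ⟨h1, h2, h3⟩ := h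
  simp only [List.length_ofFn] at h2 h3
  have h4 := congrArg (fun l => l[i - (n - ℓ)]?) h3
  have e : n - ℓ + (i - (n - ℓ)) = i := by omega
  have e1 : i - (n - ℓ) < ℓ := by omega
  have e2 : i - (n - ℓ) < n := by omega
  simp [List.getElem?_drop, e, e1, e2, hi] at h4
  exact h4.symm

theorem dropEnd_injOn {Γ : Type} (n ℓ : ℕ) (hl : ℓ < n) :
    Set.InjOn (dropEnd (Γ := Γ) (n := n) ℓ) {S | HasBorder (List.ofFn S) ℓ} := by
  intro S hS T hT hST
  have key : ∀ i (hi : i < n), S ⟨i, hi⟩ = T ⟨i, hi⟩ := by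
    intro i
    induction i using Nat.strong_induction_on with
    | _ i ih =>
      intro hi
      by_cases hc : i < n - ℓ
      · exact congrFun hST ⟨i, hc⟩
      · rw [period_of_hasBorder hS i hi (by omega), period_of_hasBorder hT i hi (by omega)]
        exact ih _ (by omega) _
  funext i
  exact key i i.2

/-- Union bound over the length `ℓ` of a proper border. -/
theorem deficit_sum_rec (Γ : Type) [Fintype Γ] (n : ℕ) :
    ∑ S : Fin n → Γ, ((n : ℝ) - (maxUnb (List.ofFn S) : ℝ)) ≤
      ∑ ℓ ∈ Ico 1 n, ∑ S : Fin (n - ℓ) → Γ,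
        ((ℓ : ℝ) + (((n - ℓ : ℕ) : ℝ) - (maxUnb (List.ofFn S) : ℝ))) := by
  classical
  have hnn : ∀ ℓ : ℕ, ∀ S : Fin (n - ℓ) → Γ,
      0 ≤ (ℓ : ℝ) + (((n - ℓ : ℕ) : ℝ) - (maxUnb (List.ofFn S) : ℝ)) := by
    intro ℓ S
    have h := maxUnb_le_length (List.ofFn S)
    rw [List.length_ofFn] at h
    have h' : (maxUnb (List.ofFn S) : ℝ) ≤ ((n - ℓ : ℕ) : ℝ) := by exact_mod_cast h
    have : (0 : ℝ) ≤ ℓ := Nat.cast_nonneg ℓ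
    linarith
  calc ∑ S : Fin n → Γ, ((n : ℝ) - (maxUnb (List.ofFn S) : ℝ))
      ≤ ∑ S : Fin n → Γ, ∑ ℓ ∈ Ico 1 n, if HasBorder (List.ofFn S) ℓ then
          ((ℓ : ℝ) + (((n - ℓ : ℕ) : ℝ) - (maxUnb (List.ofFn (dropEnd ℓ S)) : ℝ))) else 0 := by
        refine Finset.sum_le_sum fun S _ => ?_
        have hterm : ∀ ℓ ∈ Ico 1 n, (0 : ℝ) ≤ if HasBorder (List.ofFn S) ℓ then
            ((ℓ : ℝ) + (((n - ℓ : ℕ) : ℝ) - (maxUnb (List.ofFn (dropEnd ℓ S)) : ℝ))) else 0 := by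
          intro ℓ _
          split_ifs
          · exact hnn ℓ _
          · exact le_rfl
        by_cases hu : Unbordered (List.ofFn S)
        · have h := length_le_maxUnb hu
          rw [List.length_ofFn] at h
          have h' : (n : ℝ) ≤ (maxUnb (List.ofFn S) : ℝ) := by exact_mod_cast h
          linarith [Finset.sum_nonneg hterm]
        · unfold Unbordered at hu
          push Not at hu
          obtain ⟨ℓ, hl, hb⟩ := hu
          rw [List.length_ofFn] at hl
          refine le_trans ?_ (Finset.single_le_sum hterm (Finset.mem_Ico.2 ⟨hb.1, hl⟩))
          rw [if_pos hb, Nat.cast_sub hl.le]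
          have h : (maxUnb (List.ofFn (dropEnd ℓ S)) : ℝ) ≤ (maxUnb (List.ofFn S) : ℝ) := by
            exact_mod_cast maxUnb_mono (ofFn_dropEnd_infix ℓ S)
          linarith
    _ = ∑ ℓ ∈ Ico 1 n, ∑ S : Fin n → Γ, if HasBorder (List.ofFn S) ℓ then
          ((ℓ : ℝ) + (((n - ℓ : ℕ) : ℝ) - (maxUnb (List.ofFn (dropEnd ℓ S)) : ℝ))) else 0 :=
        Finset.sum_comm
    _ ≤ _ := by
        refine Finset.sum_le_sum fun ℓ hl => ?_
        rw [← Finset.sum_filter]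
        have hinj : Set.InjOn (dropEnd (Γ := Γ) (n := n) ℓ)
            (Finset.univ.filter fun S : Fin n → Γ => HasBorder (List.ofFn S) ℓ) := by
          simpa using dropEnd_injOn n ℓ (Finset.mem_Ico.1 hl).2
        rw [← Finset.sum_image (f := fun S : Fin (n - ℓ) → Γ =>
          (ℓ : ℝ) + (((n - ℓ : ℕ) : ℝ) - (maxUnb (List.ofFn S) : ℝ))) hinj]
        exact Finset.sum_le_sum_of_subset_of_nonneg (Finset.subset_univ _) fun S _ _ => hnn ℓ S

theorem geom_Ico_le {y : ℝ} (h0 : 0 ≤ y) (h1 : y ≤ 1 / 2) (n : ℕ) :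
    ∑ ℓ ∈ Ico 1 n, y ^ ℓ ≤ 2 * y := by
  have key : ∀ k : ℕ, ∑ ℓ ∈ Ico 1 (k + 1), y ^ ℓ ≤ 2 * y - 2 * y ^ (k + 1) := by
    intro k
    induction k with
    | zero => simp
    | succ k ih =>
      rw [Finset.sum_Ico_succ_top (by omega)]
      have hp : 0 ≤ y ^ (k + 1) := pow_nonneg h0 _
      have hs : y ^ (k + 1 + 1) = y ^ (k + 1) * y := pow_succ _ _
      nlinarith
  cases n with
  | zero => simpa using h0
  | succ k => linarith [key k, pow_nonneg h0 (k + 1)]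

theorem deficit_sum_le (Γ : Type) [Fintype Γ] (s : ℝ) (hs : (Fintype.card Γ : ℝ) = s)
    (h4 : 4 ≤ s) (n : ℕ) :
    ∑ S : Fin n → Γ, ((n : ℝ) - (maxUnb (List.ofFn S) : ℝ)) ≤ 4 / s * s ^ n := by
  induction n using Nat.strong_induction_on with
  | _ n ih =>
    have hs0 : 0 < s := by linarith
    calc _ ≤ _ := deficit_sum_rec Γ n
      _ ≤ ∑ ℓ ∈ Ico 1 n, s ^ n * (2 / s) ^ ℓ := by
        refine Finset.sum_le_sum fun ℓ hl => ?_
        obtain ⟨hl1, hl2⟩ := Finset.mem_Ico.1 hl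
        have hi := ih (n - ℓ) (by omega)
        have hp : 0 < s ^ (n - ℓ) := pow_pos hs0 _
        have hq : 4 / s * s ^ (n - ℓ) ≤ 1 * s ^ (n - ℓ) :=
          mul_le_mul_of_nonneg_right ((div_le_one hs0).2 h4) hp.le
        rw [Finset.sum_add_distrib]
        have hc : ∑ _S : Fin (n - ℓ) → Γ, (ℓ : ℝ) = ℓ * s ^ (n - ℓ) := by
          simp [hs, mul_comm]
        have h2 : (ℓ : ℝ) + 1 ≤ 2 ^ ℓ := by exact_mod_cast Nat.lt_two_pow_self (n := ℓ)
        have he : s ^ n * (2 / s) ^ ℓ = 2 ^ ℓ * s ^ (n - ℓ) := by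
          rw [div_pow, ← Nat.sub_add_cancel hl2.le, pow_add, Nat.add_sub_cancel]
          field_simp
        rw [hc, he]
        nlinarith
      _ = s ^ n * ∑ ℓ ∈ Ico 1 n, (2 / s) ^ ℓ := by rw [Finset.mul_sum]
      _ ≤ s ^ n * (2 * (2 / s)) := by
        refine mul_le_mul_of_nonneg_left (geom_Ico_le (by positivity) ?_ n) (by positivity)
        rw [div_le_div_iff₀ hs0 (by norm_num)]
        linarith
      _ = 4 / s * s ^ n := by ring

/-- for an alphabet of size `σ ≥ e¹⁰` and uniformly random `S ∈ Σⁿ`,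
`E[n - L(S)] ≤ (σ²e² - e⁴) / (σ³ - 2σ²e² + e⁴)`. -/
theorem expected_maxUnbordered_large_sigma (σ : ℕ) (hσ : Real.exp 10 ≤ (σ : ℝ))
    (Γ : Type) [Fintype Γ] (hcard : Fintype.card Γ = σ) (n : ℕ) :
    (∑ S : Fin n → Γ, ((n : ℝ) - (maxUnb (List.ofFn S) : ℝ))) / (σ : ℝ) ^ n ≤
      ((σ : ℝ) ^ 2 * Real.exp 2 - Real.exp 4) /
        ((σ : ℝ) ^ 3 - 2 * (σ : ℝ) ^ 2 * Real.exp 2 + Real.exp 4) := by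
  have he1 : (2 : ℝ) ≤ Real.exp 1 := by linarith [Real.add_one_le_exp (1 : ℝ)]
  have he2 : Real.exp 2 = Real.exp 1 ^ 2 := by rw [← Real.exp_nat_mul]; norm_num
  have he4 : Real.exp 4 = Real.exp 2 ^ 2 := by rw [← Real.exp_nat_mul]; norm_num
  have hE : (4 : ℝ) ≤ Real.exp 2 := by nlinarith
  have h8 : (9 : ℝ) ≤ Real.exp 8 := by linarith [Real.add_one_le_exp (8 : ℝ)]
  have hsE : 9 * Real.exp 2 ≤ (σ : ℝ) := by
    have h10 : Real.exp 10 = Real.exp 8 * Real.exp 2 := by rw [← Real.exp_add]; norm_num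
    nlinarith
  rw [he4]
  generalize Real.exp 2 = E at *
  have hmain := deficit_sum_le Γ (σ : ℝ) (by rw [hcard]) (by linarith) n
  generalize (σ : ℝ) = s at *
  have hs0 : 0 < s := by linarith
  have hD : 0 < s ^ 3 - 2 * s ^ 2 * E + E ^ 2 := by
    have h : 0 < s ^ 2 * (s - 2 * E) := by
      have : 0 < s - 2 * E := by linarith
      positivity
    nlinarith [sq_nonneg E]
  calc _ ≤ 4 / s := by
        rw [div_le_iff₀ (pow_pos hs0 n)]
        exact hmain
    _ ≤ _ := by
        rw [div_le_div_iff₀ hs0 hD]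
        have a1 : 0 ≤ (E - 4) * s ^ 3 := mul_nonneg (by linarith) (by positivity)
        have a2 : 0 ≤ s * E * (s - E) := mul_nonneg (by positivity) (by linarith)
        have a3 : E * E ≤ s * s * E := by nlinarith
        nlinarith [mul_nonneg (mul_nonneg hs0.le hs0.le) (by linarith : 0 ≤ E)]
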